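/- Let ε, Δτ, C, q₀ ∈ ℝ and suppose (p(n), q(n)) satisfies the lifted T̂_{ε,Δτ} recursion for all n ∈ ℕ. Define sₙ = Δτ·p(n) + 2q(n) − q₀ − CΔτ(n + 1/2) and tₙ = Δτ·p(n+1) + 2q(n+1) − q₀ − CΔτ(n + 3/2). Then for all n ∈ ℕ: s_{n+1} = tₙ and t_{n+1} = 2tₙ − 2ε(Δτ)²·tan(π tₙ) − sₙ; i.e., the sequence (sₙ, tₙ) is an orbit of the map T̃_{ε,Δτ}(s,t) = (t, 2t − 2ε(Δτ)²·tan(πt) − s), which realizes (on the lifts) the topological semi-conjugacy between T̂_{ε,Δτ} and T̃_{ε,Δτ}. -/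

import Mathlib

/-- A sequence `(p n, q n)` satisfies the lifted `T̂_{ε,Δτ}` recursion. -/
noncomputable def ThatRecursion (ε Δτ C q₀ : ℝ) (p q : ℕ → ℝ) : Prop :=
  ∀ n : ℕ,
    p (n + 1) = p n - ε * Δτ *
      Real.tan (Real.pi * (2 * q n + Δτ * p n - q₀ - C * Δτ * ((n : ℝ) + 1 / 2))) ∧
    q (n + 1) = q n + p n * Δτ - (ε * Δτ ^ 2 / 2) *
      Real.tan (Real.pi * (2 * q n + Δτ * p n - q₀ - C * Δτ * ((n : ℝ) + 1 / 2)))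

/-!
One step of `T̂` moves `q` by the trapezoidal rule, `qₙ₊₁ - qₙ = Δτ (pₙ + pₙ₊₁) / 2`, so the phase
`θₙ = Δτ pₙ + 2 qₙ - q₀ - C Δτ (n + 1 / 2)` advances by `Δτ (2 pₙ₊₁ - C)`, which depends on
the new momentum only. Hence the second difference of `θ` is `2 Δτ` times a momentum kick, i.e.
`-2 ε Δτ² tan (π θₙ₊₁)`, and `(sₙ, tₙ) = (θₙ, θₙ₊₁)` is an orbit of `T̃`.
-/

section Phase

variable {K : Type*} [Field K]

/-- The phase at time `n` of a phase-space trajectory `(p, q)`; `T̂` kicks the momentum in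
proportion to `tan (π * phase)`. In characteristic two the offset `1 / 2` is the junk value `0`. -/
def phase (Δτ C q₀ : K) (p q : ℕ → K) (n : ℕ) : K :=
  Δτ * p n + 2 * q n - q₀ - C * Δτ * ((n : K) + 1 / 2)

variable {ε Δτ C q₀ : K} {p q : ℕ → K} {n : ℕ}

theorem phase_succ_sub_phase (hq : 2 * (q (n + 1) - q n) = Δτ * (p n + p (n + 1))) :
    phase Δτ C q₀ p q (n + 1) - phase Δτ C q₀ p q n = Δτ * (2 * p (n + 1) - C) := by
  simp only [phase, Nat.cast_succ]
  linear_combination hq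

theorem phase_add_two_of_trapezoidal {f : K → K}
    (hq : ∀ m, 2 * (q (m + 1) - q m) = Δτ * (p m + p (m + 1)))
    (hp : ∀ m, p (m + 1) = p m - ε * Δτ * f (phase Δτ C q₀ p q m)) :
    phase Δτ C q₀ p q (n + 2) =
      2 * phase Δτ C q₀ p q (n + 1) - 2 * ε * Δτ ^ 2 * f (phase Δτ C q₀ p q (n + 1)) -
        phase Δτ C q₀ p q n := by
  have first_increment := phase_succ_sub_phase (C := C) (q₀ := q₀) (hq n)
  have second_increment := phase_succ_sub_phase (C := C) (q₀ := q₀) (hq (n + 1))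
  linear_combination second_increment - first_increment + 2 * Δτ * hp (n + 1)

end Phase

namespace ThatRecursion

variable {ε Δτ C q₀ : ℝ} {p q : ℕ → ℝ}

theorem momentum_succ (hpq : ThatRecursion ε Δτ C q₀ p q) (n : ℕ) :
    p (n + 1) = p n - ε * Δτ * Real.tan (Real.pi * phase Δτ C q₀ p q n) := by
  rw [(hpq n).1, phase, add_comm (2 * q n)]

theorem two_mul_position_sub (hpq : ThatRecursion ε Δτ C q₀ p q) (n : ℕ) :
    2 * (q (n + 1) - q n) = Δτ * (p n + p (n + 1)) := by
  obtain ⟨hp, hq⟩ := hpq n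
  linear_combination 2 * hq - Δτ * hp

theorem phase_add_two (hpq : ThatRecursion ε Δτ C q₀ p q) (n : ℕ) :
    phase Δτ C q₀ p q (n + 2) =
      2 * phase Δτ C q₀ p q (n + 1) -
        2 * ε * Δτ ^ 2 * Real.tan (Real.pi * phase Δτ C q₀ p q (n + 1)) -
        phase Δτ C q₀ p q n :=
  phase_add_two_of_trapezoidal (f := fun θ ↦ Real.tan (Real.pi * θ))
    hpq.two_mul_position_sub hpq.momentum_succ

end ThatRecursion

/-- The variables `sₙ, tₙ` obtained from a `T̂_{ε,Δτ}` orbit form an orbit of the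
map `T̃_{ε,Δτ}(s,t) = (t, 2t − 2ε(Δτ)²·tan(πt) − s)` (semi-conjugacy on the lifts). -/
theorem That_semiconjugate_Ttilde (ε Δτ C q₀ : ℝ) (p q : ℕ → ℝ)
    (hpq : ThatRecursion ε Δτ C q₀ p q)
    (s t : ℕ → ℝ)
    (hs : ∀ n : ℕ, s n = Δτ * p n + 2 * q n - q₀ - C * Δτ * ((n : ℝ) + 1 / 2))
    (ht : ∀ n : ℕ, t n = Δτ * p (n + 1) + 2 * q (n + 1) - q₀ - C * Δτ * ((n : ℝ) + 3 / 2)) :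
    ∀ n : ℕ,
      s (n + 1) = t n ∧
      t (n + 1) = 2 * t n - 2 * ε * Δτ ^ 2 * Real.tan (Real.pi * t n) - s n := by
  have s_eq_phase (n : ℕ) : s n = phase Δτ C q₀ p q n := hs n
  have t_eq_phase_succ (n : ℕ) : t n = phase Δτ C q₀ p q (n + 1) := by
    rw [ht, phase, Nat.cast_succ]
    ring
  intro n
  constructor
  · rw [s_eq_phase, t_eq_phase_succ]
  · rw [t_eq_phase_succ, t_eq_phase_succ, s_eq_phase]
    exact hpq.phase_add_two n
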